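/- For every f ∈ 𝒮(ℝⁿ) (n ≥ 1), every j ∈ {1,…,n}, and every p ∈ ℝⁿ: X₀(q ↦ q_j f(q))(p) − p_j (X₀f)(p) = i · 𝓕( x ↦ (x_j/‖x‖)·(𝓕⁻¹f)(x) )(p), where the integrand on the right is extended by 0 at x = 0 and is integrable. That is, the commutator of the temporal coordinate operator X₀ with multiplication by the momentum component p_j equals i times the Fourier conjugate of multiplication by x_j/‖x‖ (the Fourier-transformed velocity operator arising in the first-order translation covariance of X₀). -/

import Mathlib

open MeasureTheory Real Filter
open scoped RealInnerProductSpace SchwartzMap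

noncomputable section

/-- ℝⁿ as a Euclidean space. -/
abbrev Eu (n : ℕ) := EuclideanSpace ℝ (Fin n)

/-- The Fourier transform (𝓕ψ)(p) = (2π)^{-n/2} ∫ e^{-i⟨p,x⟩} ψ(x) dx. -/
def FT {n : ℕ} (ψ : Eu n → ℂ) (p : Eu n) : ℂ :=
  (Real.sqrt ((2 * Real.pi) ^ n))⁻¹ • ∫ x, Complex.exp (-Complex.I * (⟪p, x⟫ : ℝ)) * ψ x

/-- The inverse Fourier transform (𝓕⁻¹ψ)(x) = (2π)^{-n/2} ∫ e^{i⟨x,p⟩} ψ(p) dp. -/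
def FTinv {n : ℕ} (ψ : Eu n → ℂ) (x : Eu n) : ℂ :=
  (Real.sqrt ((2 * Real.pi) ^ n))⁻¹ • ∫ p, Complex.exp (Complex.I * (⟪x, p⟫ : ℝ)) * ψ p

/-- The one-particle temporal coordinate operator X₀f = 𝓕(x ↦ ‖x‖·(𝓕⁻¹f)(x)). -/
def X0 {n : ℕ} (f : Eu n → ℂ) : Eu n → ℂ :=
  FT (fun x => (‖x‖ : ℂ) * FTinv f x)

theorem hasFDerivAt_sqrt_norm_sq_add {E : Type*} [NormedAddCommGroup E] [InnerProductSpace ℝ E]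
    {ε : ℝ} (hε : 0 < ε) (x : E) :
    HasFDerivAt (fun y : E => √(‖y‖ ^ 2 + ε)) ((√(‖x‖ ^ 2 + ε))⁻¹ • innerSL ℝ x) x := by
  have h := ((hasStrictFDerivAt_norm_sq x).hasFDerivAt.add_const ε).sqrt
    (by positivity : ‖x‖ ^ 2 + ε ≠ 0)
  convert h using 1
  ext v
  simp
  field_simp

theorem sqrt_norm_sq_add_le {E : Type*} [NormedAddCommGroup E] {ε : ℝ} (hε : ε ≤ 1) (x : E) :
    √(‖x‖ ^ 2 + ε) ≤ ‖x‖ + 1 :=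
  Real.sqrt_le_iff.2 ⟨by positivity, by nlinarith [norm_nonneg x]⟩

theorem abs_inner_div_sqrt_le {E : Type*} [NormedAddCommGroup E] [InnerProductSpace ℝ E]
    {ε : ℝ} (hε : 0 ≤ ε) (x v : E) : |⟪x, v⟫ / √(‖x‖ ^ 2 + ε)| ≤ ‖v‖ := by
  rw [abs_div, abs_of_nonneg (Real.sqrt_nonneg _)]
  refine div_le_of_le_mul₀ (Real.sqrt_nonneg _) (norm_nonneg _) ((abs_real_inner_le_norm x v).trans ?_)
  rw [mul_comm]
  gcongr
  exact Real.le_sqrt_of_sq_le (by linarith)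

section IntegrationByParts

variable {E : Type*} [NormedAddCommGroup E] [InnerProductSpace ℝ E] [FiniteDimensional ℝ E]
  [MeasurableSpace E] [BorelSpace E] {μ : Measure E} [μ.IsAddHaarMeasure] {h : E → ℂ} {v : E}

theorem integral_sqrt_norm_sq_add_mul_fderiv (hd : Differentiable ℝ h) (hi : Integrable h μ)
    (hn : Integrable (fun x => (‖x‖ : ℂ) * h x) μ)
    (hi' : Integrable (fun x => fderiv ℝ h x v) μ)
    (hn' : Integrable (fun x => (‖x‖ : ℂ) * fderiv ℝ h x v) μ) {ε : ℝ} (hε : 0 < ε)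
    (hε1 : ε ≤ 1) :
    ∫ x, ((√(‖x‖ ^ 2 + ε) : ℝ) : ℂ) * fderiv ℝ h x v ∂μ
      = -∫ x, ((⟪x, v⟫ / √(‖x‖ ^ 2 + ε) : ℝ) : ℂ) * h x ∂μ := by
  have key : ∀ {g : E → ℂ}, Integrable g μ → Integrable (fun x => (‖x‖ : ℂ) * g x) μ →
      Integrable (fun x => ((√(‖x‖ ^ 2 + ε) : ℝ) : ℂ) * g x) μ := by
    intro g hg hg'
    refine (hg'.norm.add hg.norm).mono' ?_ (ae_of_all _ fun x => ?_)
    · exact (Continuous.aestronglyMeasurable (by fun_prop)).mul hg.1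
    · simp only [norm_mul, Complex.norm_real, Real.norm_eq_abs, Pi.add_apply, abs_norm]
      rw [abs_of_nonneg (Real.sqrt_nonneg _), ← add_one_mul]
      gcongr
      exact sqrt_norm_sq_add_le hε1 x
  have hφ : ∀ x : E, HasFDerivAt (fun y : E => ((√(‖y‖ ^ 2 + ε) : ℝ) : ℂ))
      (Complex.ofRealCLM.comp ((√(‖x‖ ^ 2 + ε))⁻¹ • innerSL ℝ x)) x := fun x =>
    Complex.ofRealCLM.hasFDerivAt.comp x (hasFDerivAt_sqrt_norm_sq_add hε x)
  have hφ' : ∀ x : E, fderiv ℝ (fun y : E => ((√(‖y‖ ^ 2 + ε) : ℝ) : ℂ)) x v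
      = ((⟪x, v⟫ / √(‖x‖ ^ 2 + ε) : ℝ) : ℂ) := fun x => by
    rw [(hφ x).fderiv]
    simp [div_eq_inv_mul]
  have hmain := integral_mul_fderiv_eq_neg_fderiv_mul_of_integrable (μ := μ) (v := v)
    (f := fun y : E => ((√(‖y‖ ^ 2 + ε) : ℝ) : ℂ)) (g := h) ?_ (key hi' hn') (key hi hn)
    (fun x _ => (hφ x).differentiableAt) (fun x _ => hd x)
  · simpa only [hφ'] using hmain
  · simp only [hφ']
    refine hi.bdd_mul (c := ‖v‖) ?_ (ae_of_all _ fun x => ?_)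
    · exact Measurable.aestronglyMeasurable (by fun_prop)
    · simpa only [Complex.norm_real, Real.norm_eq_abs] using abs_inner_div_sqrt_le hε.le x v

/-- Integration by parts against the (non-smooth) Euclidean norm. -/
theorem integral_norm_mul_fderiv (hd : Differentiable ℝ h) (hi : Integrable h μ)
    (hn : Integrable (fun x => (‖x‖ : ℂ) * h x) μ)
    (hi' : Integrable (fun x => fderiv ℝ h x v) μ)
    (hn' : Integrable (fun x => (‖x‖ : ℂ) * fderiv ℝ h x v) μ) :
    ∫ x, (‖x‖ : ℂ) * fderiv ℝ h x v ∂μ = -∫ x, ((⟪x, v⟫ / ‖x‖ : ℝ) : ℂ) * h x ∂μ := by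
  have hmem : Set.Ioc (0 : ℝ) 1 ∈ nhdsWithin (0 : ℝ) (Set.Ioi 0) := Ioc_mem_nhdsGT one_pos
  have hsqrt : ∀ x : E, Tendsto (fun ε : ℝ => √(‖x‖ ^ 2 + ε)) (nhdsWithin 0 (Set.Ioi 0))
      (nhds ‖x‖) := fun x => by
    have : Continuous fun ε : ℝ => √(‖x‖ ^ 2 + ε) := by fun_prop
    simpa using (this.tendsto 0).mono_left nhdsWithin_le_nhds
  have hl : Tendsto (fun ε : ℝ => ∫ x, ((√(‖x‖ ^ 2 + ε) : ℝ) : ℂ) * fderiv ℝ h x v ∂μ)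
      (nhdsWithin 0 (Set.Ioi 0)) (nhds (∫ x, (‖x‖ : ℂ) * fderiv ℝ h x v ∂μ)) := by
    refine tendsto_integral_filter_of_dominated_convergence _ (.of_forall fun ε => ?_) ?_
      (hn'.norm.add hi'.norm) (ae_of_all _ fun x => ?_)
    · exact (Continuous.aestronglyMeasurable (by fun_prop)).mul hi'.1
    · filter_upwards [hmem] with ε hε
      refine ae_of_all _ fun x => ?_
      simp only [norm_mul, Complex.norm_real, Real.norm_eq_abs, Pi.add_apply, abs_norm]
      rw [abs_of_nonneg (Real.sqrt_nonneg _), ← add_one_mul]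
      gcongr
      exact sqrt_norm_sq_add_le hε.2 x
    · exact ((Complex.continuous_ofReal.tendsto _).comp (hsqrt x)).mul_const _
  have hr : Tendsto (fun ε : ℝ => ∫ x, ((⟪x, v⟫ / √(‖x‖ ^ 2 + ε) : ℝ) : ℂ) * h x ∂μ)
      (nhdsWithin 0 (Set.Ioi 0)) (nhds (∫ x, ((⟪x, v⟫ / ‖x‖ : ℝ) : ℂ) * h x ∂μ)) := by
    refine tendsto_integral_filter_of_dominated_convergence _ (.of_forall fun ε => ?_) ?_
      (hi.norm.const_mul ‖v‖) (ae_of_all _ fun x => ?_)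
    · exact (Measurable.aestronglyMeasurable (by fun_prop)).mul hi.1
    · filter_upwards [hmem] with ε hε
      refine ae_of_all _ fun x => ?_
      simp only [norm_mul, Complex.norm_real, Real.norm_eq_abs]
      gcongr
      exact abs_inner_div_sqrt_le hε.1.le x v
    · refine ((Complex.continuous_ofReal.tendsto _).comp ?_).mul_const _
      rcases eq_or_ne x 0 with rfl | hx
      · simp
      · exact tendsto_const_nhds.div (hsqrt x) (norm_ne_zero_iff.2 hx)
  refine tendsto_nhds_unique hl (hr.neg.congr' ?_)
  filter_upwards [hmem] with ε hε
  exact (integral_sqrt_norm_sq_add_mul_fderiv hd hi hn hi' hn' hε.1 hε.2).symm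

end IntegrationByParts

section FourierInversion

variable {n : ℕ}

theorem FTinv_eq_fourierInv (ψ : Eu n → ℂ) (x : Eu n) :
    FTinv ψ x = (√((2 * π) ^ n))⁻¹ • FourierTransform.fourierInv ψ ((2 * π)⁻¹ • x) := by
  rw [FTinv, Real.fourierInv_eq']
  congr 2 with q
  rw [inner_smul_right, mul_inv_cancel_left₀ (by positivity), real_inner_comm, smul_eq_mul,
    mul_comm Complex.I]

/-- The inverse Fourier transform with the symmetric normalisation, as a Schwartz function. -/
def schwartzFTinv (f : 𝓢(Eu n, ℂ)) : 𝓢(Eu n, ℂ) :=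
  (√((2 * π) ^ n))⁻¹ • SchwartzMap.compCLMOfContinuousLinearEquiv ℂ
    (ContinuousLinearEquiv.smulLeft (Units.mk0 (2 * π)⁻¹ (by positivity)))
    (FourierTransform.fourierInv f)

theorem schwartzFTinv_apply (f : 𝓢(Eu n, ℂ)) (x : Eu n) : schwartzFTinv f x = FTinv f x := by
  rw [FTinv_eq_fourierInv, ← SchwartzMap.fourierInv_coe]
  rfl

theorem coe_schwartzFTinv (f : 𝓢(Eu n, ℂ)) : ⇑(schwartzFTinv f) = FTinv f :=
  funext (schwartzFTinv_apply f)

/-- Multiplication of a Schwartz function by the `j`-th coordinate. -/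
def coordMul (j : Fin n) (f : 𝓢(Eu n, ℂ)) : 𝓢(Eu n, ℂ) :=
  SchwartzMap.smulLeftCLM ℂ (fun q : Eu n => ⟪q, EuclideanSpace.single j (1 : ℝ)⟫) f

theorem coe_coordMul (j : Fin n) (f : 𝓢(Eu n, ℂ)) :
    ⇑(coordMul j f) = fun q => (q j : ℂ) * f q := by
  ext q
  rw [coordMul, SchwartzMap.smulLeftCLM_apply_apply (by fun_prop)]
  simp [EuclideanSpace.inner_single_right]

theorem fderiv_schwartzFTinv (f : 𝓢(Eu n, ℂ)) (j : Fin n) (x : Eu n) :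
    fderiv ℝ (schwartzFTinv f) x (EuclideanSpace.single j 1)
      = Complex.I * schwartzFTinv (coordMul j f) x := by
  have h : fderiv ℝ (FourierTransform.fourierInv f) ((2 * π)⁻¹ • x) (EuclideanSpace.single j 1)
      = (2 * π * Complex.I) * FourierTransform.fourierInv (coordMul j f) ((2 * π)⁻¹ • x) := by
    rw [← SchwartzMap.lineDerivOp_apply_eq_fderiv, SchwartzMap.lineDerivOp_fourierInv_eq,
      FourierTransform.fourierInv_smul]
    rfl
  have hG : ⇑(schwartzFTinv f) = fun y => (√((2 * π) ^ n))⁻¹ •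
      (FourierTransform.fourierInv f : 𝓢(Eu n, ℂ)) ((2 * π)⁻¹ • y) := rfl
  have hd : HasFDerivAt (schwartzFTinv f) ((√((2 * π) ^ n))⁻¹ •
      (fderiv ℝ (FourierTransform.fourierInv f : 𝓢(Eu n, ℂ)) ((2 * π)⁻¹ • x)).comp
        ((2 * π)⁻¹ • ContinuousLinearMap.id ℝ (Eu n))) x := by
    rw [hG]
    exact (((FourierTransform.fourierInv f : 𝓢(Eu n, ℂ)).differentiableAt.hasFDerivAt).comp x
      ((hasFDerivAt_id x).const_smul (2 * π)⁻¹)).const_smul (√((2 * π) ^ n))⁻¹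
  have hG' : schwartzFTinv (coordMul j f) x = (√((2 * π) ^ n))⁻¹ •
      (FourierTransform.fourierInv (coordMul j f) : 𝓢(Eu n, ℂ)) ((2 * π)⁻¹ • x) := rfl
  rw [hd.fderiv, hG']
  simp only [FunLike.coe_smul, Pi.smul_apply, ContinuousLinearMap.comp_apply,
    ContinuousLinearMap.id_apply, map_smul, h, Complex.real_smul]
  have hπ : (π : ℂ) ≠ 0 := Complex.ofReal_ne_zero.2 pi_ne_zero
  push_cast
  field_simp

theorem SchwartzMap.integrable_norm_mul (g : 𝓢(Eu n, ℂ)) :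
    Integrable (fun x => (‖x‖ : ℂ) * g x) := by
  refine (g.integrable_pow_mul volume 1).mono' ?_ (ae_of_all _ fun x => by simp)
  exact Continuous.aestronglyMeasurable (by fun_prop)

theorem integrable_cexp_mul {g : Eu n → ℂ} (hg : Integrable g) (p : Eu n) :
    Integrable (fun x => Complex.exp (-Complex.I * (⟪p, x⟫ : ℝ)) * g x) := by
  refine hg.bdd_mul (c := 1) (Continuous.aestronglyMeasurable (by fun_prop))
    (ae_of_all _ fun x => ?_)
  simp [Complex.norm_exp]

theorem hasFDerivAt_cexp_inner (p x : Eu n) :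
    HasFDerivAt (fun y => Complex.exp (-Complex.I * (⟪p, y⟫ : ℝ)))
      (Complex.exp (-Complex.I * (⟪p, x⟫ : ℝ)) •
        (-Complex.I) • Complex.ofRealCLM.comp (innerSL ℝ p)) x :=
  (((Complex.ofRealCLM.comp (innerSL ℝ p)).hasFDerivAt).const_smul (-Complex.I)).cexp

end FourierInversion

/-- The commutator of the temporal coordinate operator X₀ with multiplication by the
momentum component p_j equals i times the Fourier conjugate of multiplication by
x_j/‖x‖ (extended by 0 at x = 0, and integrable):
X₀(q ↦ q_j f(q))(p) − p_j (X₀f)(p) = i·𝓕(x ↦ (x_j/‖x‖)(𝓕⁻¹f)(x))(p). -/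
theorem stmt3 {n : ℕ} (hn : 1 ≤ n) (f : 𝓢(Eu n, ℂ)) (j : Fin n) (p : Eu n) :
    Integrable (fun x : Eu n => ((x j / ‖x‖ : ℝ) : ℂ) * FTinv (f : Eu n → ℂ) x) ∧
      X0 (fun q => (q j : ℂ) * f q) p - (p j : ℂ) * X0 (f : Eu n → ℂ) p
        = Complex.I * FT (fun x => ((x j / ‖x‖ : ℝ) : ℂ) * FTinv (f : Eu n → ℂ) x) p := by
  set e : Eu n → ℂ := fun x => Complex.exp (-Complex.I * (⟪p, x⟫ : ℝ)) with he
  set G := schwartzFTinv f with hG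
  set H := schwartzFTinv (coordMul j f) with hH
  have hderiv : ∀ x, HasFDerivAt (fun y => e y * G y) _ x := fun x =>
    (hasFDerivAt_cexp_inner p x).mul (G.differentiableAt (x := x)).hasFDerivAt
  have hfderiv : ∀ x, fderiv ℝ (fun y => e y * G y) x (EuclideanSpace.single j 1)
      = Complex.I * (e x * H x) - Complex.I * p j * (e x * G x) := fun x => by
    rw [(hderiv x).fderiv]
    simp [hG, fderiv_schwartzFTinv, EuclideanSpace.inner_single_right, ← hH]
    simp only [he, neg_mul]
    ring
  have hiG : Integrable fun x => e x * G x := integrable_cexp_mul G.integrable p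
  have hiH : Integrable fun x => e x * H x := integrable_cexp_mul H.integrable p
  have hnG : Integrable fun x => e x * ((‖x‖ : ℂ) * G x) := integrable_cexp_mul G.integrable_norm_mul p
  have hnH : Integrable fun x => e x * ((‖x‖ : ℂ) * H x) := integrable_cexp_mul H.integrable_norm_mul p
  have hparts := integral_norm_mul_fderiv (μ := volume) (h := fun y => e y * G y)
    (v := EuclideanSpace.single j 1) (fun x => (hderiv x).differentiableAt) hiG
    (hnG.congr (ae_of_all _ fun x => by ring))
    (by simp only [hfderiv]; exact (hiH.const_mul _).sub (hiG.const_mul _))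
    (((hnH.const_mul Complex.I).sub (hnG.const_mul (Complex.I * p j))).congr
      (ae_of_all _ fun x => by
        simp only [hfderiv, Pi.sub_apply]; ring))
  refine ⟨?_, ?_⟩
  · rw [← coe_schwartzFTinv]
    refine G.integrable.bdd_mul (c := 1) (Measurable.aestronglyMeasurable (by fun_prop))
      (ae_of_all _ fun x => ?_)
    rw [Complex.norm_real, norm_div, norm_norm]
    exact div_le_one_of_le₀ (PiLp.norm_apply_le x j) (norm_nonneg _)
  · have hleft : ∫ x, (‖x‖ : ℂ) * fderiv ℝ (fun y => e y * G y) x (EuclideanSpace.single j 1)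
        = Complex.I * (∫ x, e x * ((‖x‖ : ℂ) * H x))
          - Complex.I * p j * ∫ x, e x * ((‖x‖ : ℂ) * G x) := by
      rw [← integral_const_mul, ← integral_const_mul,
        ← integral_sub (hnH.const_mul _) (hnG.const_mul _)]
      congr 1 with x
      rw [hfderiv]
      ring
    have hright : ∫ x, ((⟪x, EuclideanSpace.single j (1 : ℝ)⟫ / ‖x‖ : ℝ) : ℂ) * (e x * G x)
        = ∫ x, e x * (((x j / ‖x‖ : ℝ) : ℂ) * G x) := by
      congr 1 with x
      rw [EuclideanSpace.inner_single_right]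
      simp
      ring
    rw [hleft, hright] at hparts
    rw [← coe_coordMul, X0, X0, ← coe_schwartzFTinv, ← coe_schwartzFTinv]
    simp only [FT, Complex.real_smul]
    linear_combination (-Complex.I * ((√((2 * π) ^ n))⁻¹ : ℝ)) * hparts
      + ((√((2 * π) ^ n))⁻¹ : ℝ) * ((∫ x, e x * ((‖x‖ : ℂ) * H x))
        - p j * ∫ x, e x * ((‖x‖ : ℂ) * G x)) * Complex.I_sq

end
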